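/- Every complete directed graph on n ≥ k + 2Ω(k) vertices (k ≥ 2) whose edges are weighted by elements of Z_k contains a directed cycle whose total edge weight is 0 in Z_k. -/

import Mathlib

/-- Ω(n): number of prime factors of n counted with multiplicity. -/
def bigOmega (n : ℕ) : ℕ := (Nat.primeFactorsList n).length

/-- The weight of a directed cycle given by a list of distinct vertices:
the sum of the weights of its edges (consecutive, including the closing edge). -/
def cycleWeight {V : Type*} {k : ℕ} (w : V → V → ZMod k) (c : List V) : ZMod k :=
  ((c.zip (c.rotate 1)).map fun p => w p.1 p.2).sum

/-!
Fix a vertex `b`. For the vertices `c` of a shrinking set `U`, maintain sets `G c` of weights of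
paths from `b` to `c` outside `U` that are unions of cosets of a subgroup `H` and have at least `m`
elements. Once `m` reaches the order of the group, the weight of `c → b` can be cancelled.

To increase `m`, release one to three vertices `x` of `U`, so that paths may pass through them. If
some `c` gains nothing, then all the sets `G x` are translates of `G c` by edge weights, hence the
weights of the cycles on the released vertices are periods of `G x`. So `H` can be replaced by a
larger stabilizer at the cost of one vertex, unless all cycles on two or three vertices of `U` have
weight in `H`. In that case a potential makes the weighting on `U` take values in `H`, and the claim
for `H` applies by induction. At most two of these losses are ever outstanding, and a proper
subgroup has a smaller `Ω`: this accounts for the term `2 * Ω`.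
-/

open Function Finset
open scoped Pointwise ArithmeticFunction.Omega

section Walks

theorem exists_simple_cycle_of_forall_ne {α : Type*} [Finite α] [Nonempty α] {f : α → α}
    (hf : ∀ x, f x ≠ x) :
    ∃ a l, l ≠ [] ∧ (a :: l).Nodup ∧ (a :: (l ++ [a])).IsChain fun x y => f x = y := by
  obtain ⟨x, hx⟩ : ∃ x, x ∈ periodicPts f := by
    obtain ⟨x⟩ := ‹Nonempty α›
    obtain ⟨i, j, hij, hiter⟩ :=
      Set.finite_univ.exists_lt_map_eq_of_forall_mem fun n => Set.mem_univ (f^[n] x)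
    refine ⟨f^[i] x, mk_mem_periodicPts (Nat.sub_pos_of_lt hij) ?_⟩
    rw [IsPeriodicPt, IsFixedPt, ← iterate_add_apply, Nat.sub_add_cancel hij.le, hiter]
  have hchain := (periodicOrbit_chain' (f · = ·) hx).2 fun n => (iterate_succ_apply' f n x).symm
  have hnodup := nodup_periodicOrbit (f := f) (x := x)
  have hlength := periodicOrbit_length (f := f) (x := x)
  generalize periodicOrbit f x = C at hchain hnodup hlength
  induction C using Quotient.inductionOn' with | _ c
  cases c with
  | nil => exact absurd hlength.symm (minimalPeriod_pos_of_mem_periodicPts hx).ne'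
  | cons a l =>
    refine ⟨a, l, ?_, hnodup, hchain⟩
    rintro rfl
    exact hf x (minimalPeriod_eq_one_iff_isFixedPt.1 hlength.symm)

variable {V V' A B : Type*}

/-- The weight of the walk from `a` to `c` whose interior vertices are listed by `l`. Keeping the
endpoints out of the list makes a cycle through `a` the special case `c = a`. -/
def pathWeight [AddMonoid A] (w : V → V → A) : V → List V → V → A
  | a, [], c => w a c
  | a, x :: l, c => w a x + pathWeight w x l c

theorem pathWeight_append_singleton [AddMonoid A] (w : V → V → A) (a : V) (l : List V) (x c : V) :
    pathWeight w a (l ++ [x]) c = pathWeight w a l x + w x c := by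
  induction l generalizing a with
  | nil => rfl
  | cons y l ih => simp only [List.cons_append, pathWeight, ih, add_assoc]

theorem sum_zipWith_cons_append_singleton [AddMonoid A] (w : V → V → A) (a : V) (l : List V)
    (c : V) : (List.zipWith w (a :: l) (l ++ [c])).sum = pathWeight w a l c := by
  induction l generalizing a with
  | nil => simp [pathWeight]
  | cons x l ih =>
    simp only [List.cons_append, List.zipWith_cons_cons, List.sum_cons, ih, pathWeight]

/-- Some directed cycle, on at least two distinct vertices, has total weight zero. -/
def HasZeroCycle [AddMonoid A] (w : V → V → A) : Prop :=
  ∃ a l, l ≠ [] ∧ (a :: l).Nodup ∧ pathWeight w a l a = 0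

theorem isChain_ne_of_nodup_cons {a : V} {l : List V} (hl : l ≠ []) (h : (a :: l).Nodup) :
    (a :: (l ++ [a])).IsChain (· ≠ ·) := by
  rw [← List.cons_append, List.isChain_append]
  refine ⟨h.isChain, List.isChain_singleton a, ?_⟩
  rintro x hx y hy rfl
  obtain rfl : a = x := by simpa using hy
  rw [List.getLast?_cons_of_ne_nil hl] at hx
  exact (List.nodup_cons.1 h).1 (List.mem_of_getLast? hx)

variable [AddCommGroup A] [AddCommGroup B]

/-- The contributions of a potential `φ` telescope along a walk. -/
theorem map_pathWeight {w : V → V → A} {w' : V' → V' → B} {f : B →+ A} {ι : V' → V} {φ : V' → A}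
    (h : ∀ u v, u ≠ v → f (w' u v) = w (ι u) (ι v) + φ u - φ v) {a c : V'} {l : List V'}
    (hl : (a :: (l ++ [c])).IsChain (· ≠ ·)) :
    f (pathWeight w' a l c) = pathWeight w (ι a) (l.map ι) (ι c) + φ a - φ c := by
  induction l generalizing a with
  | nil => exact h a c (List.isChain_pair.1 hl)
  | cons x l ih =>
    obtain ⟨hax, hl⟩ := List.isChain_cons_cons.1 hl
    simp only [pathWeight, List.map_cons, map_add, h a x hax, ih hl]
    abel

theorem HasZeroCycle.of_potential {w : V → V → A} {w' : V' → V' → B} {f : B →+ A} {φ : V' → A}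
    (ι : V' ↪ V) (h : ∀ u v, u ≠ v → f (w' u v) = w (ι u) (ι v) + φ u - φ v)
    (hw' : HasZeroCycle w') : HasZeroCycle w := by
  obtain ⟨a, l, hl, hnodup, hzero⟩ := hw'
  refine ⟨ι a, l.map ι, by simpa using hl, hnodup.map ι.injective, ?_⟩
  have hsum := map_pathWeight h (isChain_ne_of_nodup_cons hl hnodup)
  rwa [hzero, map_zero, add_sub_cancel_right, eq_comm] at hsum

theorem pathWeight_vadd_eq {w : V → V → A} {G : V → Set A} {a c : V} {l : List V}
    (hl : (a :: (l ++ [c])).IsChain fun x y => w x y +ᵥ G x = G y) :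
    pathWeight w a l c +ᵥ G a = G c := by
  induction l generalizing a with
  | nil => simpa [pathWeight] using hl
  | cons x l ih =>
    obtain ⟨hax, hl⟩ := List.isChain_cons_cons.1 hl
    rw [pathWeight, add_comm, add_vadd, hax, ih hl]

theorem hasZeroCycle_of_two {w : V → V → A} {x y : V} (hxy : x ≠ y) (h : w x y + w y x = 0) :
    HasZeroCycle w :=
  ⟨x, [y], by simp, by simp [hxy], h⟩

theorem hasZeroCycle_of_three {w : V → V → A} {x y z : V} (hxy : x ≠ y) (hyz : y ≠ z) (hzx : z ≠ x)
    (h : w x y + w y z + w z x = 0) : HasZeroCycle w :=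
  ⟨x, [y, z], by simp, by simp [hxy, hyz, hzx.symm], by simpa [pathWeight, add_assoc] using h⟩

end Walks

section SmallSubgroups

variable {V A : Type*} [AddCommGroup A] {w : V → V → A} {W : Set V} {H : AddSubgroup A}

/-- All directed cycles on two or three vertices of `W` have weight in `H`. -/
structure ShortCyclesMem (w : V → V → A) (W : Set V) (H : AddSubgroup A) : Prop where
  two : ∀ x ∈ W, ∀ y ∈ W, x ≠ y → w x y + w y x ∈ H
  three : ∀ x ∈ W, ∀ y ∈ W, ∀ z ∈ W, x ≠ y → y ≠ z → z ≠ x → w x y + w y z + w z x ∈ H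

theorem ShortCyclesMem.exists_potential (h : ShortCyclesMem w W H) :
    ∃ φ : V → A, ∀ u ∈ W, ∀ v ∈ W, u ≠ v → w u v + φ u - φ v ∈ H := by
  classical
  obtain rfl | ⟨o, ho⟩ := W.eq_empty_or_nonempty
  · exact ⟨0, by simp⟩
  refine ⟨fun v => if v = o then 0 else w o v, fun u hu v hv huv => ?_⟩
  by_cases huo : u = o
  · subst huo
    simp [huv.symm]
  by_cases hvo : v = o
  · subst hvo
    simpa [huo] using h.two u hu v hv huv
  simp only [huo, hvo, if_false]
  convert H.sub_mem (h.three o ho u hu v hv (Ne.symm huo) huv hvo)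
    (h.two o ho v hv (Ne.symm hvo)) using 1
  abel

/-- A potential turns `w` on `W` into an `H`-valued weighting with the same cycle weights. -/
theorem ShortCyclesMem.hasZeroCycle (h : ShortCyclesMem w W H)
    (hW : ∀ w' : W → W → H, HasZeroCycle w') : HasZeroCycle w := by
  obtain ⟨φ, hφ⟩ := h.exists_potential
  have hlift : ∀ u v : W, ∃ r : H, u ≠ v → (r : A) = w u v + φ u - φ v := by
    intro u v
    by_cases huv : u = v
    · exact ⟨0, fun hne => absurd huv hne⟩
    · exact ⟨⟨_, hφ u u.2 v v.2 (Subtype.coe_ne_coe.2 huv)⟩, fun _ => rfl⟩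
  choose w' hw' using hlift
  exact (hW w').of_potential (f := H.subtype) (φ := fun v : W => φ v) (Embedding.subtype _) hw'

end SmallSubgroups

section FiniteGroups

theorem cardFactors_lt_of_dvd_of_lt {m n : ℕ} (hdvd : m ∣ n) (hlt : m < n) : Ω m < Ω n := by
  obtain ⟨q, rfl⟩ := hdvd
  have hm : m ≠ 0 := by rintro rfl; simp at hlt
  have hq : 1 < q := lt_of_mul_lt_mul_left' (by rwa [mul_one])
  rw [ArithmeticFunction.cardFactors_mul hm (by lia)]
  exact Nat.lt_add_of_pos_right (ArithmeticFunction.cardFactors_pos_iff_one_lt.2 hq)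

variable {A : Type*} [AddCommGroup A] {H K : AddSubgroup A} {m : ℕ} {P Q R : Set A}

theorem two_mul_card_le_card_of_lt [Finite K] (h : H < K) : 2 * Nat.card H ≤ Nat.card K := by
  obtain ⟨q, hq⟩ := AddSubgroup.card_dvd_of_le h.le
  have hlt : Nat.card H < Nat.card K :=
    lt_of_not_ge fun hle => h.ne (AddSubgroup.eq_of_le_of_card_ge h.le hle)
  have hq2 : 1 < q := lt_of_mul_lt_mul_left' (by rwa [mul_one, ← hq])
  rw [hq, mul_comm]
  exact Nat.mul_le_mul_left _ hq2

theorem exists_forall_eq_of_card_eq_two (hH : Nat.card H = 2) :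
    ∃ h, ∀ r ∈ H, r ≠ 0 → r = h := by
  obtain ⟨h, -, hh⟩ := (Nat.card_eq_two_iff' (0 : H)).1 hH
  exact ⟨h, fun r hr hr0 => congrArg Subtype.val
    (hh ⟨r, hr⟩ fun h0 => hr0 (congrArg Subtype.val h0))⟩

theorem card_dvd_ncard_of_le_stabilizer (h : H ≤ AddAction.stabilizer A P) :
    Nat.card H ∣ P.ncard := by
  have hPH : P + (H : Set A) = P := by
    refine Set.Subset.antisymm ?_ fun r hr => ⟨r, hr, 0, H.zero_mem, add_zero r⟩
    rintro _ ⟨r, hr, a, ha, rfl⟩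
    simpa only [vadd_eq_add, add_comm] using (AddAction.mem_stabilizer_set.1 (h ha) r).2 hr
  have hcard := Nat.card_congr (QuotientAddGroup.preimageMkEquivAddSubgroupProdSet H
    (QuotientAddGroup.mk '' P))
  rw [QuotientAddGroup.preimage_image_mk_eq_add, hPH, Nat.card_prod] at hcard
  exact ⟨_, hcard⟩

/-- `P` is a part of `R` with at least `m` elements that is a union of cosets of `H`. -/
structure IsPeriodicSubset (H : AddSubgroup A) (m : ℕ) (R P : Set A) : Prop where
  subset : P ⊆ R
  le_stabilizer : H ≤ AddAction.stabilizer A P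
  le_ncard : m ≤ P.ncard

namespace IsPeriodicSubset

theorem mono {R' : Set A} (h : IsPeriodicSubset H m R P) (hR : R ⊆ R') :
    IsPeriodicSubset H m R' P :=
  ⟨h.subset.trans hR, h.le_stabilizer, h.le_ncard⟩

theorem vadd (h : IsPeriodicSubset H m R P) (a : A) :
    IsPeriodicSubset H m (a +ᵥ R) (a +ᵥ P) where
  subset := Set.vadd_set_mono h.subset
  le_stabilizer := h.le_stabilizer.trans_eq (AddAction.stabilizer_vadd_eq_right a P).symm
  le_ncard := h.le_ncard.trans_eq (Set.ncard_vadd_set a P).symm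

theorem ncard_eq (hP : IsPeriodicSubset H m R P) (hm : Nat.card H ∣ m)
    (hmax : ¬ IsPeriodicSubset H (m + Nat.card H) R P) : P.ncard = m := by
  have hlt : P.ncard < m + Nat.card H :=
    lt_of_not_ge fun hle => hmax ⟨hP.subset, hP.le_stabilizer, hle⟩
  have hdvd := Nat.dvd_sub (card_dvd_ncard_of_le_stabilizer hP.le_stabilizer) hm
  have hzero := Nat.eq_zero_of_dvd_of_lt hdvd (by have := hP.le_ncard; lia)
  have := hP.le_ncard
  lia

variable [Finite A]

theorem union (hP : IsPeriodicSubset H m R P) (hQ : IsPeriodicSubset H m R Q) :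
    IsPeriodicSubset H m R (P ∪ Q) where
  subset := Set.union_subset hP.subset hQ.subset
  le_stabilizer := (le_inf hP.le_stabilizer hQ.le_stabilizer).trans
    AddAction.stabilizer_inf_stabilizer_le_stabilizer_union
  le_ncard := hP.le_ncard.trans (Set.ncard_le_ncard Set.subset_union_left)

theorem eq_of_maximal (hP : IsPeriodicSubset H m R P) (hQ : IsPeriodicSubset H m R Q)
    (hm : Nat.card H ∣ m) (hmax : ∀ S, ¬ IsPeriodicSubset H (m + Nat.card H) R S) : P = Q := by
  have hPQ := (hP.union hQ).ncard_eq hm (hmax _)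
  exact (Set.eq_of_subset_of_ncard_le Set.subset_union_left (hPQ.trans_le hP.le_ncard)).trans
    (Set.eq_of_subset_of_ncard_le Set.subset_union_right (hPQ.trans_le hQ.le_ncard)).symm

end IsPeriodicSubset

end FiniteGroups

section PathWeights

variable {V A : Type*} [AddCommGroup A] {w : V → V → A} {b c x y : V} {U U' : Finset V}

/-- The weights of the paths from `b` to `c` whose vertices other than `c` avoid `U`. -/
def pathWeights (w : V → V → A) (b : V) (U : Finset V) (c : V) : Set A :=
  {r | ∃ l, (b :: l).Nodup ∧ (∀ v ∈ b :: l, v ∉ U) ∧ pathWeight w b l c = r}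

theorem mem_pathWeights_of_notMem (hb : b ∉ U) (c : V) : w b c ∈ pathWeights w b U c :=
  ⟨[], List.nodup_singleton b, by simpa using hb, rfl⟩

theorem pathWeights_anti (h : U' ⊆ U) : pathWeights w b U c ⊆ pathWeights w b U' c :=
  fun _ ⟨l, hnodup, hU, hr⟩ => ⟨l, hnodup, fun v hv hvU => hU v hv (h hvU), hr⟩

theorem vadd_pathWeights_subset (h : U' ⊆ U) (hx : x ∈ U) (hx' : x ∉ U') (c : V) :
    w x c +ᵥ pathWeights w b U x ⊆ pathWeights w b U' c := by
  rintro _ ⟨_, ⟨l, hnodup, hU, rfl⟩, rfl⟩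
  refine ⟨l ++ [x], ?_, ?_, ?_⟩
  · rw [← List.cons_append, List.nodup_append]
    refine ⟨hnodup, List.nodup_singleton x, ?_⟩
    rintro v hv _ hvx rfl
    exact hU v hv (List.mem_singleton.1 hvx ▸ hx)
  · intro v hv
    rw [← List.cons_append, List.mem_append, List.mem_singleton] at hv
    rcases hv with hv | rfl
    · exact fun hvU => hU v hv (h hvU)
    · exact hx'
  · rw [pathWeight_append_singleton, add_comm]
    rfl

theorem hasZeroCycle_of_neg_mem_pathWeights (hc : c ∈ U) (h : -w c b ∈ pathWeights w b U c) :
    HasZeroCycle w := by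
  obtain ⟨l, hnodup, hU, hr⟩ := h
  refine ⟨b, l ++ [c], by simp, ?_, ?_⟩
  · rw [← List.cons_append, List.nodup_append]
    refine ⟨hnodup, List.nodup_singleton c, ?_⟩
    rintro v hv _ hvc rfl
    exact hU v hv (List.mem_singleton.1 hvc ▸ hc)
  · rw [pathWeight_append_singleton, hr, neg_add_cancel]

end PathWeights

section Families

variable {V A : Type*} [AddCommGroup A] {w : V → V → A} {b c x y z : V}
  {U X : Finset V} {H : AddSubgroup A} {m : ℕ} {G : V → Set A}

/-- For every `c ∈ U`, the set `G c` consists of weights of paths from `b` to `c` outside `U`, is a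
union of cosets of `H`, and has at least `m` elements. -/
def IsPeriodicFamily (w : V → V → A) (b : V) (U : Finset V) (H : AddSubgroup A) (m : ℕ)
    (G : V → Set A) : Prop :=
  ∀ c ∈ U, IsPeriodicSubset H m (pathWeights w b U c) (G c)

/-- Routing paths to `c` through one or two vertices of `X` yields no weight outside `G c`. -/
structure IsStuck (w : V → V → A) (G : V → Set A) (X : Finset V) (c : V) : Prop where
  vadd_eq : ∀ x ∈ X, w x c +ᵥ G x = G c
  vadd_eq_of_ne : ∀ x ∈ X, ∀ y ∈ X, x ≠ y → w x y +ᵥ G x = G y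

theorem IsStuck.two_cycle_mem (h : IsStuck w G X c) (hx : x ∈ X) (hy : y ∈ X) (hxy : x ≠ y) :
    w x y + w y x ∈ AddAction.stabilizer A (G x) := by
  rw [AddAction.mem_stabilizer_iff, add_comm, add_vadd, h.vadd_eq_of_ne x hx y hy hxy,
    h.vadd_eq_of_ne y hy x hx hxy.symm]

theorem IsStuck.three_cycle_mem (h : IsStuck w G X c) (hx : x ∈ X) (hy : y ∈ X) (hz : z ∈ X)
    (hxy : x ≠ y) (hyz : y ≠ z) (hzx : z ≠ x) :
    w x y + w y z + w z x ∈ AddAction.stabilizer A (G x) := by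
  rw [AddAction.mem_stabilizer_iff, add_comm, add_comm (w x y), add_vadd, add_vadd,
    h.vadd_eq_of_ne x hx y hy hxy, h.vadd_eq_of_ne y hy z hz hyz, h.vadd_eq_of_ne z hz x hx hzx]

theorem IsStuck.detour_mem (h : IsStuck w G X c) (hx : x ∈ X) (hy : y ∈ X) (hxy : x ≠ y) :
    w x y + w y c - w x c ∈ AddAction.stabilizer A (G x) := by
  rw [AddAction.mem_stabilizer_iff, sub_eq_neg_add, add_comm (w x y), add_vadd, add_vadd,
    h.vadd_eq_of_ne x hx y hy hxy, h.vadd_eq y hy, ← h.vadd_eq x hx, neg_vadd_vadd]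

variable [DecidableEq V]

theorem IsPeriodicFamily.erase [Finite A] (hG : IsPeriodicFamily w b U H m G) (hx : x ∈ U) :
    IsPeriodicFamily w b (U.erase x) (AddAction.stabilizer A (G x)) (G x).ncard
      fun c => w x c +ᵥ G x :=
  fun c _ => (IsPeriodicSubset.vadd ⟨(hG x hx).subset, le_rfl, le_rfl⟩ (w x c)).mono
    (vadd_pathWeights_subset (U.erase_subset x) hx (U.notMem_erase x) c)

theorem IsPeriodicFamily.exists_sdiff_or_isStuck [Finite A] (hG : IsPeriodicFamily w b U H m G)
    (hm : Nat.card H ∣ m) (hX : X ⊆ U) :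
    (∃ G', IsPeriodicFamily w b (U \ X) H (m + Nat.card H) G') ∨
      ∃ c ∈ U \ X, IsStuck w G X c ∧ ∀ x ∈ X, (G x).ncard = m := by
  by_cases hgrow : ∀ c ∈ U \ X, ∃ P,
      IsPeriodicSubset H (m + Nat.card H) (pathWeights w b (U \ X) c) P
  · choose! G' hG' using hgrow
    exact .inl ⟨G', hG'⟩
  push Not at hgrow
  obtain ⟨c, hc, hmax⟩ := hgrow
  have hGc := (hG c (sdiff_subset hc)).mono
    (pathWeights_anti (U' := U \ X) sdiff_subset)
  have hone : ∀ x ∈ X, w x c +ᵥ G x = G c := fun x hx =>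
    (((hG x (hX hx)).vadd (w x c)).mono (vadd_pathWeights_subset sdiff_subset (hX hx)
      (notMem_sdiff_of_mem_right hx) c)).eq_of_maximal hGc hm hmax
  have htwo : ∀ x ∈ X, ∀ y ∈ X, x ≠ y → w y c +ᵥ (w x y +ᵥ G x) = G c := by
    intro x hx y hy hxy
    have hxy_path := ((hG x (hX hx)).vadd (w x y)).mono
      (vadd_pathWeights_subset (U.erase_subset x) (hX hx) (U.notMem_erase x) y)
    have hsub : U \ X ⊆ U.erase x := fun v hv => mem_erase.2
      ⟨fun h => (mem_sdiff.1 hv).2 (h ▸ hx), sdiff_subset hv⟩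
    exact ((hxy_path.vadd (w y c)).mono (vadd_pathWeights_subset hsub
      (mem_erase.2 ⟨hxy.symm, hX hy⟩) (notMem_sdiff_of_mem_right hy) c)).eq_of_maximal hGc hm hmax
  refine .inr ⟨c, hc, ⟨hone, fun x hx y hy hxy => ?_⟩, fun x hx => ?_⟩
  · exact vadd_left_cancel _ ((htwo x hx y hy hxy).trans (hone y hy).symm)
  · rw [← Set.ncard_vadd_set (w x c), hone x hx, hGc.ncard_eq hm (hmax _)]

/-- If all cycle weights were nonzero, then the three 2-cycles on `x`, `y`, `c` and the triangle
`x → y → c → x` would have the same weight, of order two, and the reverse triangle weight zero. -/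
theorem IsStuck.stabilizer_ne_of_card_eq_two (h : IsStuck w G {x, y} c) (hw : ¬ HasZeroCycle w)
    (hH : Nat.card H = 2) (hxy : x ≠ y) (hyc : y ≠ c) (hcx : c ≠ x)
    (hxyH : w x y + w y x ∈ H) (hycH : w y c + w c y ∈ H) (hcxH : w c x + w x c ∈ H) :
    AddAction.stabilizer A (G x) ≠ H := by
  intro hstab
  obtain ⟨g, hg⟩ := exists_forall_eq_of_card_eq_two hH
  have htriH : w x y + w y c + w c x ∈ H := by
    have hdetour := h.detour_mem (mem_insert_self x {y})
      (mem_insert_of_mem (mem_singleton_self y)) hxy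
    convert H.add_mem (hstab ▸ hdetour) hcxH using 1
    abel
  have hxy0 : w x y + w y x ≠ 0 := fun h0 => hw (hasZeroCycle_of_two hxy h0)
  have hxyg := hg _ hxyH hxy0
  have hycg := hg _ hycH fun h0 => hw (hasZeroCycle_of_two hyc h0)
  have hcxg := hg _ hcxH fun h0 => hw (hasZeroCycle_of_two hcx h0)
  have htrig := hg _ htriH fun h0 => hw (hasZeroCycle_of_three hxy hyc hcx h0)
  have hgH : g ∈ H := hxyg ▸ hxyH
  have hg0 : g ≠ 0 := hxyg ▸ hxy0
  have hgg : g + g = 0 := by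
    by_contra hne
    exact hg0 (add_eq_left.1 (hg _ (H.add_mem hgH hgH) hne))
  refine hw (hasZeroCycle_of_three hcx.symm hyc.symm hxy.symm ?_)
  calc w x c + w c y + w y x
      = (w x y + w y x) + (w y c + w c y) + (w c x + w x c) - (w x y + w y c + w c x) := by abel
    _ = 0 := by rw [hxyg, hycg, hcxg, htrig, hgg, zero_add, sub_self]

/-- The growth step adds at most three vertices, so it pays for itself once `H` has at least three
elements; when `H` has order two, two vertices have to do. -/
theorem exists_forall_isStuck_stabilizer_ne [Finite H] (hw : ¬ HasZeroCycle w) (hU : 1 < #U)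
    (hH : H ≠ ⊥) (hUH : ¬ ShortCyclesMem w U H) :
    ∃ X ⊆ U, X.Nonempty ∧ #X ≤ 3 ∧ #X ≤ Nat.card H ∧
      ∀ G, ∀ c ∈ U \ X, IsStuck w G X c → ∃ x ∈ X, AddAction.stabilizer A (G x) ≠ H := by
  have hH1 : 1 < Nat.card H := H.one_lt_card_iff_ne_bot.2 hH
  by_cases htwo : ∀ x ∈ U, ∀ y ∈ U, x ≠ y → w x y + w y x ∈ H
  · by_cases hH2 : Nat.card H = 2
    · obtain ⟨x, hx, y, hy, hxy⟩ := one_lt_card.1 hU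
      have hX := card_le_two (a := x) (b := y)
      refine ⟨{x, y}, by grind, by simp, by lia, by lia, fun G c hc hG => ⟨x, by simp, ?_⟩⟩
      obtain ⟨hcU, hcx, hcy⟩ : c ∈ U ∧ c ≠ x ∧ c ≠ y := by simpa using hc
      exact hG.stabilizer_ne_of_card_eq_two hw hH2 hxy hcy.symm hcx (htwo x hx y hy hxy)
        (htwo y hy c hcU hcy.symm) (htwo c hcU x hx hcx)
    · obtain ⟨x, hx, y, hy, z, hz, hxy, hyz, hzx, hnot⟩ : ∃ x ∈ U, ∃ y ∈ U, ∃ z ∈ U,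
          x ≠ y ∧ y ≠ z ∧ z ≠ x ∧ w x y + w y z + w z x ∉ H := by
        by_contra! hthree
        exact hUH ⟨htwo, hthree⟩
      have hX := card_le_three (a := x) (b := y) (c := z)
      refine ⟨{x, y, z}, by grind, by simp, by lia, by lia, fun G c _ hG => ⟨x, by simp, ?_⟩⟩
      rintro rfl
      exact hnot (hG.three_cycle_mem (by simp) (by simp) (by simp) hxy hyz hzx)
  · push Not at htwo
    obtain ⟨x, hx, y, hy, hxy, hnot⟩ := htwo
    have hX := card_le_two (a := x) (b := y)
    refine ⟨{x, y}, by grind, by simp, by lia, by lia, fun G c _ hG => ⟨x, by simp, ?_⟩⟩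
    rintro rfl
    exact hnot (hG.two_cycle_mem (by simp) (by simp) hxy)

end Families

section Growth

variable {V A : Type*} [DecidableEq V] [AddCommGroup A] {w : V → V → A} {b : V} {U : Finset V}
  {H : AddSubgroup A} {m : ℕ} {G : V → Set A}

/-- If every vertex is stuck, following the stuck edges closes up to a cycle, and its nonzero weight
is a period of the sets along it. -/
theorem exists_stabilizer_ne_bot_of_forall_isStuck (hw : ¬ HasZeroCycle w) (hU : U.Nonempty)
    (hstuck : ∀ x ∈ U, ∃ c ∈ U \ {x}, IsStuck w G {x} c) :
    ∃ x ∈ U, AddAction.stabilizer A (G x) ≠ ⊥ := by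
  have hnext : ∀ x : U, ∃ c : U, c ≠ x ∧ w x c +ᵥ G x = G c := by
    rintro ⟨x, hx⟩
    obtain ⟨c, hc, hxc⟩ := hstuck x hx
    obtain ⟨hcU, hcx⟩ : c ∈ U ∧ c ≠ x := by simpa using hc
    exact ⟨⟨c, hcU⟩, by simpa using hcx, hxc.vadd_eq x (mem_singleton_self x)⟩
  choose f hf hfG using hnext
  have := hU.to_subtype
  obtain ⟨a, l, hl, hnodup, hchain⟩ := exists_simple_cycle_of_forall_ne hf
  refine ⟨a, a.2, fun hbot => hw ?_⟩
  have hperiod : pathWeight (fun x y : U => w x y) a l a +ᵥ G a = G a :=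
    pathWeight_vadd_eq (w := fun x y : U => w x y) (G := fun x : U => G x)
      (hchain.imp fun x y (hxy : f x = y) => hxy ▸ hfG x)
  rw [← AddAction.mem_stabilizer_iff, hbot, AddSubgroup.mem_bot] at hperiod
  exact HasZeroCycle.of_potential (f := AddMonoidHom.id A) (φ := 0) (Embedding.subtype (· ∈ U))
    (by simp) ⟨a, l, hl, hnodup, hperiod⟩

theorem IsPeriodicFamily.exists_step [Finite A] (hG : IsPeriodicFamily w b U H m G)
    (hw : ¬ HasZeroCycle w) (hU : 1 < #U)
    (hUH : H ≠ ⊥ → ¬ ShortCyclesMem w U H) (hm : Nat.card H ∣ m) :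
    (∃ X ⊆ U, X.Nonempty ∧ #X ≤ 3 ∧ #X ≤ Nat.card H ∧
        ∃ G', IsPeriodicFamily w b (U \ X) H (m + Nat.card H) G') ∨
      ∃ x ∈ U, AddAction.stabilizer A (G x) ≠ H ∧ (G x).ncard = m := by
  obtain rfl | hH := eq_or_ne H ⊥
  · by_cases hgrow : ∃ x ∈ U, ∃ G',
        IsPeriodicFamily w b (U \ {x}) ⊥ (m + Nat.card (⊥ : AddSubgroup A)) G'
    · obtain ⟨x, hx, hG'⟩ := hgrow
      exact .inl ⟨{x}, by simpa using hx, by simp, by simp, by simp, hG'⟩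
    · push Not at hgrow
      have hstuck : ∀ x ∈ U, ∃ c ∈ U \ {x}, IsStuck w G {x} c ∧ ∀ y ∈ ({x} : Finset V),
          (G y).ncard = m := fun x hx =>
        (hG.exists_sdiff_or_isStuck hm (singleton_subset_iff.2 hx)).resolve_left
          fun ⟨G', hG'⟩ => hgrow x hx G' hG'
      obtain ⟨x, hx, hne⟩ := exists_stabilizer_ne_bot_of_forall_isStuck hw
        (card_pos.1 (by lia)) fun x hx =>
          let ⟨c, hc, hxc, _⟩ := hstuck x hx; ⟨c, hc, hxc⟩
      obtain ⟨_, _, _, hcard⟩ := hstuck x hx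
      exact .inr ⟨x, hx, hne, hcard x (mem_singleton_self x)⟩
  · obtain ⟨X, hXU, hX, hX3, hXH, hne⟩ := exists_forall_isStuck_stabilizer_ne hw hU hH (hUH hH)
    obtain hG' | ⟨c, hc, hstuck, hcard⟩ := hG.exists_sdiff_or_isStuck hm hXU
    · exact .inl ⟨X, hXU, hX, hX3, hXH, hG'⟩
    · obtain ⟨x, hx, hxH⟩ := hne G c hc hstuck
      exact .inr ⟨x, hXU hx, hxH, hcard x hx⟩

end Growth

section Search

variable {V A : Type*} [AddCommGroup A] {w : V → V → A} {b : V} {U X : Finset V}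
  {H : AddSubgroup A} {m e : ℕ} {G G' : V → Set A}

/-- The invariant of the search for a zero cycle. Replacing `H` by a larger stabilizer costs a
vertex without increasing `m`, and `e` counts those losses that have not been recovered. Right after
such a step all stabilizers equal `H`, which forces the next step to increase `m`; if `e = 2`, then
`H` has at least four elements, so that step gains more than the at most three vertices it uses. -/
structure IsSearchState (w : V → V → A) (b : V) (U : Finset V) (H : AddSubgroup A) (m e : ℕ)
    (G : V → Set A) : Prop where
  nonempty : U.Nonempty
  family : IsPeriodicFamily w b U H m G
  card_dvd : Nat.card H ∣ m
  pos : 0 < m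
  card_le : Nat.card A + 2 * Ω (Nat.card A) ≤ #U + m + e + 1
  two_pow_le : 2 ^ e ≤ Nat.card H
  stabilizer_eq : e ≤ 1 ∨ e = 2 ∧ ∀ c ∈ U, AddAction.stabilizer A (G c) = H

namespace IsSearchState

variable [Finite A]

theorem lt_card (h : IsSearchState w b U H m e G) (hw : ¬ HasZeroCycle w) : m < Nat.card A := by
  by_contra! hle
  obtain ⟨c, hc⟩ := h.nonempty
  have huniv : G c = Set.univ := Set.eq_of_subset_of_ncard_le (Set.subset_univ _)
    (by simpa only [Set.ncard_univ] using hle.trans (h.family c hc).le_ncard)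
  exact hw (hasZeroCycle_of_neg_mem_pathWeights hc
    ((h.family c hc).subset (huniv ▸ Set.mem_univ (-w c b))))

theorem add_card_le (h : IsSearchState w b U H m e G) (hw : ¬ HasZeroCycle w) :
    m + Nat.card H ≤ Nat.card A := by
  have hlt := h.lt_card hw
  have := Nat.le_of_dvd (Nat.sub_pos_of_lt hlt) (Nat.dvd_sub H.card_addSubgroup_dvd_card h.card_dvd)
  lia

theorem ne_top (h : IsSearchState w b U H m e G) (hw : ¬ HasZeroCycle w) : H ≠ ⊤ := by
  rintro rfl
  have := h.add_card_le hw
  rw [AddSubgroup.card_top] at this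
  have := h.pos
  lia

theorem card_add_le (h : IsSearchState w b U H m e G) (hw : ¬ HasZeroCycle w) :
    Nat.card H + 2 * Ω (Nat.card H) + 1 ≤ #U + e := by
  have hadd := h.add_card_le hw
  have hΩ := cardFactors_lt_of_dvd_of_lt H.card_addSubgroup_dvd_card
    (by have := h.pos; lia)
  have := h.card_le
  lia

theorem card_lt (h : IsSearchState w b U H m e G) (hw : ¬ HasZeroCycle w) :
    Nat.card H < #U := by
  have hadd := h.card_add_le hw
  obtain rfl | he := Nat.eq_zero_or_pos e
  · lia
  have hΩ : 0 < Ω (Nat.card H) := ArithmeticFunction.cardFactors_pos_iff_one_lt.2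
    ((Nat.one_lt_two_pow he.ne').trans_le h.two_pow_le)
  have := h.stabilizer_eq
  lia

theorem grow [DecidableEq V] (h : IsSearchState w b U H m e G) (hw : ¬ HasZeroCycle w)
    (hXU : X ⊆ U) (hX3 : #X ≤ 3) (hXH : #X ≤ Nat.card H)
    (hG' : IsPeriodicFamily w b (U \ X) H (m + Nat.card H) G') :
    IsSearchState w b (U \ X) H (m + Nat.card H) (min e 1) G' where
  nonempty := card_pos.1 (by have := card_sdiff_add_card_eq_card hXU; have := h.card_lt hw; lia)
  family := hG'
  card_dvd := (Nat.dvd_add_self_right).2 h.card_dvd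
  pos := Nat.add_pos_left h.pos _
  card_le := by
    have hcard := card_sdiff_add_card_eq_card hXU
    have hle := h.card_le
    obtain he | ⟨rfl, -⟩ := h.stabilizer_eq
    · lia
    · have := h.two_pow_le
      lia
  two_pow_le := (Nat.pow_le_pow_right two_pos (min_le_left e 1)).trans h.two_pow_le
  stabilizer_eq := .inl (min_le_right e 1)

theorem reset [DecidableEq V] (h : IsSearchState w b U H m e G) (hw : ¬ HasZeroCycle w) {x : V}
    (hx : x ∈ U) (hne : AddAction.stabilizer A (G x) ≠ H) (hcard : (G x).ncard = m) :
    IsSearchState w b (U.erase x) (AddAction.stabilizer A (G x)) m (e + 1)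
      fun c => w x c +ᵥ G x := by
  have he : e ≤ 1 := h.stabilizer_eq.resolve_right fun heq => hne (heq.2 x hx)
  have hlt : H < AddAction.stabilizer A (G x) :=
    lt_of_le_of_ne (h.family x hx).le_stabilizer hne.symm
  have herase := card_erase_add_one hx
  refine ⟨card_pos.1 ?_, hcard ▸ h.family.erase hx, ?_, h.pos, ?_, ?_, ?_⟩
  · have := h.card_lt hw
    have := Nat.card_pos (α := H)
    lia
  · exact hcard ▸ card_dvd_ncard_of_le_stabilizer le_rfl
  · have := h.card_le
    lia
  · rw [pow_succ']
    exact (Nat.mul_le_mul_left 2 h.two_pow_le).trans (two_mul_card_le_card_of_lt hlt)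
  · obtain rfl | rfl : e = 0 ∨ e = 1 := by lia
    · exact .inl le_rfl
    · exact .inr ⟨rfl, fun c _ => AddAction.stabilizer_vadd_eq_right (w x c) (G x)⟩

theorem hasZeroCycle (h : IsSearchState w b U H m e G)
    (hshort : ∀ K : AddSubgroup A, K ≠ ⊥ → K ≠ ⊤ → ∀ W : Finset V,
      Nat.card K + 2 * Ω (Nat.card K) ≤ #W + 1 → ShortCyclesMem w W K → HasZeroCycle w) :
    HasZeroCycle w := by
  classical
  by_contra hw
  induction U using Finset.strongInduction generalizing H m e G with
  | H U ih =>
    have hU : 1 < #U := by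
      have := h.card_lt hw
      have := Nat.card_pos (α := H)
      lia
    have hUH : H ≠ ⊥ → ¬ ShortCyclesMem w U H := fun hH hUH => by
      have := h.card_add_le hw
      have := h.stabilizer_eq
      exact hw (hshort H hH (h.ne_top hw) U (by lia) hUH)
    obtain ⟨X, hXU, hX, hX3, hXH, G', hG'⟩ | ⟨x, hx, hne, hcard⟩ :=
      h.family.exists_step hw hU hUH h.card_dvd
    · exact ih _ (sdiff_ssubset hXU hX) (h.grow hw hXU hX3 hXH hG')
    · exact ih _ (erase_ssubset hx) (h.reset hw hx hne hcard)

end IsSearchState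

theorem isSearchState_init [Finite A] [Nontrivial A] [Fintype V] [DecidableEq V]
    (hV : Nat.card A + 2 * Ω (Nat.card A) ≤ Fintype.card V + 1) (w : V → V → A) (b : V) :
    IsSearchState w b (univ.erase b) ⊥ 1 0 fun c => {w b c} where
  nonempty := by
    have := Finite.one_lt_card (α := A)
    have := ArithmeticFunction.cardFactors_pos_iff_one_lt.2 this
    rw [← card_pos, card_erase_of_mem (mem_univ b), card_univ]
    lia
  family c _ :=
    ⟨Set.singleton_subset_iff.2 (mem_pathWeights_of_notMem (notMem_erase b univ) c), bot_le,
      (Set.ncard_singleton _).ge⟩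
  card_dvd := by simp
  pos := one_pos
  card_le := by
    have := card_erase_add_one (mem_univ b)
    rw [card_univ] at this
    lia
  two_pow_le := by simp
  stabilizer_eq := .inl zero_le_one

end Search

theorem hasZeroCycle_of_card_le {A V : Type*} [AddCommGroup A] [Finite A] [Nontrivial A]
    [Fintype V] (hV : Nat.card A + 2 * Ω (Nat.card A) ≤ Fintype.card V + 1) (w : V → V → A) :
    HasZeroCycle w := by
  classical
  induction hn : Nat.card A using Nat.strong_induction_on generalizing A V with
  | _ n ih =>
    subst hn
    have : Nonempty V := Fintype.card_pos_iff.1 (by have := Finite.one_lt_card (α := A); lia)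
    refine (isSearchState_init hV w (Classical.arbitrary V)).hasZeroCycle
      fun K hbot htop W hW hKW => hKW.hasZeroCycle fun w' => ?_
    have := K.nontrivial_iff_ne_bot.2 hbot
    have hlt : Nat.card K < Nat.card A :=
      lt_of_le_of_ne K.card_le_card_addGroup fun h => htop (AddSubgroup.eq_top_of_card_eq K h)
    exact ih _ hlt (V := W) (by simpa using hW) w' rfl

theorem zero_cycle_of_complete_digraph_general {V A : Type*} [AddCommGroup A] [Finite A]
    [Nontrivial A] (w : V → V → A) (T : Finset V)
    (hT : Nat.card A + 2 * Ω (Nat.card A) ≤ #T + 1) :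
    ∃ c : List V, c.Nodup ∧ 2 ≤ c.length ∧ (∀ v ∈ c, v ∈ T) ∧
      (List.zipWith w c (c.rotate 1)).sum = 0 := by
  obtain ⟨a, l, hl, hnodup, hzero⟩ :=
    hasZeroCycle_of_card_le (V := T) (by simpa using hT) fun u v => w u v
  refine ⟨(a :: l).map Subtype.val, hnodup.map Subtype.val_injective, ?_, ?_, ?_⟩
  · simpa [Nat.one_le_iff_ne_zero] using hl
  · rintro _ hv
    obtain ⟨v, -, rfl⟩ := List.mem_map.1 hv
    exact v.2
  · rw [← List.map_rotate, List.zipWith_map, List.rotate_cons_succ, List.rotate_zero,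
      sum_zipWith_cons_append_singleton, hzero]

theorem zero_cycle_of_complete_digraph (k : ℕ) (hk : 2 ≤ k)
    (V : Type*) [Fintype V] (hV : k + 2 * bigOmega k ≤ Fintype.card V)
    (w : V → V → ZMod k) :
    ∃ c : List V, c.Nodup ∧ 2 ≤ c.length ∧ cycleWeight w c = 0 := by
  have : NeZero k := ⟨by lia⟩
  have : Fact (1 < k) := ⟨hk⟩
  obtain ⟨c, hnodup, hlength, -, hzero⟩ := zero_cycle_of_complete_digraph_general w univ
    (by rw [Nat.card_zmod, card_univ]; exact hV.trans (Nat.le_succ _))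
  exact ⟨c, hnodup, hlength, (congrArg List.sum List.map_zip_eq_zipWith).trans hzero⟩
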